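/- For every integer n > 3 there exists a Steiner triple system which has both a minimal spreading set of size 3 and a minimal spreading set of size n. -/

import Mathlib

/-- A Steiner triple system on `V`: a family `T` of 3-element `Finset`s such that
every pair of distinct points lies in exactly one member of `T`. -/
def IsSTS {V : Type*} (T : Set (Finset V)) : Prop :=
  (∀ t ∈ T, t.card = 3) ∧
    ∀ x y : V, x ≠ y → ∃! t : Finset V, t ∈ T ∧ x ∈ t ∧ y ∈ t

/-- `W` is closed w.r.t. the triple system `T`: whenever a triple of `T` contains two
points of `W`, all (in particular the third) of its points lie in `W`. -/
def StsClosed {V : Type*} (T : Set (Finset V)) (W : Set V) : Prop :=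
  ∀ t ∈ T, ∀ x ∈ t, ∀ y ∈ t, x ≠ y → x ∈ W → y ∈ W → ∀ z ∈ t, z ∈ W

/-- The closure of `S` w.r.t. `T`: the smallest closed set containing `S`. -/
def stsCl {V : Type*} (T : Set (Finset V)) (S : Set V) : Set V :=
  ⋂₀ {W : Set V | S ⊆ W ∧ StsClosed T W}

/-- `S` is a spreading set: its closure is the whole point set. -/
def IsSpreading {V : Type*} (T : Set (Finset V)) (S : Set V) : Prop :=
  stsCl T S = Set.univ

/-- `S` is a minimal spreading set: it is spreading but no proper subset is. -/
def IsMinSpreading {V : Type*} (T : Set (Finset V)) (S : Set V) : Prop :=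
  IsSpreading T S ∧ ∀ S' : Set V, S' ⊂ S → ¬ IsSpreading T S'

/-!
On three copies of a module `V` in which `2` is invertible, the Bose construction gives a Steiner
triple system. A closed set with three points on level `0` has the form `(a + H) × Fin 3` for an
additive subgroup `H` of `V`, while `M × Fin 3` is closed for every submodule `M`.

Let `V` be a ring which is a quotient of `ℤ`, with `1 = e₁ + ⋯ + eₖ` a decomposition into `k ≥ 3`
nonzero orthogonal idempotents. A subgroup containing all the differences `eᵢ - eⱼ` contains
`eᵢ = eᵢ (eᵢ - eⱼ)`, hence is everything, so the points `(eᵢ, 0)` are spreading. Omitting `(eᵢ, 0)`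
leaves a subset of the closed set given by the annihilator of `eᵢ`, so the set is minimal. A product
of `n` nonzero rings `ℤ/p` has such a decomposition for every `k` with `3 ≤ k ≤ n`; it is a quotient
of `ℤ` with `2` invertible if the moduli are odd and pairwise coprime, as the Fermat numbers are.
-/

section Spreading

variable {V : Type*} {T : Set (Finset V)}

theorem isSpreading_iff {S : Set V} :
    IsSpreading T S ↔ ∀ W, S ⊆ W → StsClosed T W → W = Set.univ := by
  simp [IsSpreading, stsCl, Set.sInter_eq_univ]

theorem IsSpreading.isMinSpreading {S : Set V} (hS : IsSpreading T S)
    (hsep : ∀ u ∈ S, ∃ W, StsClosed T W ∧ S \ {u} ⊆ W ∧ u ∉ W) : IsMinSpreading T S := by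
  refine ⟨hS, fun S' hS' hspread ↦ ?_⟩
  obtain ⟨u, hu, hu'⟩ := Set.exists_of_ssubset hS'
  obtain ⟨W, hW, hSW, huW⟩ := hsep u hu
  have hS'W : S' ⊆ W := (Set.subset_sdiff_singleton hS'.subset hu').trans hSW
  exact huW (isSpreading_iff.1 hspread W hS'W hW ▸ Set.mem_univ u)

end Spreading

section Transport

variable {V V' : Type*} {T : Set (Finset V)}

theorem IsSTS.preimage_finsetCongr (hT : IsSTS T) (e : V' ≃ V) :
    IsSTS (e.finsetCongr ⁻¹' T) := by
  refine ⟨fun t ht ↦ by simpa using hT.1 _ ht, fun x y hxy ↦ ?_⟩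
  exact (e.finsetCongr.existsUnique_congr (by simp)).2 (hT.2 (e x) (e y) (e.injective.ne hxy))

theorem stsClosed_preimage_finsetCongr (e : V' ≃ V) {W : Set V} :
    StsClosed (e.finsetCongr ⁻¹' T) (e ⁻¹' W) ↔ StsClosed T W := by
  rw [StsClosed, StsClosed, e.finsetCongr.surjective.forall]
  simp [e.surjective.forall]

theorem isSpreading_preimage_finsetCongr (e : V' ≃ V) {S : Set V'} :
    IsSpreading (e.finsetCongr ⁻¹' T) S ↔ IsSpreading T (e '' S) := by
  simp_rw [isSpreading_iff, e.injective.preimage_surjective.forall,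
    stsClosed_preimage_finsetCongr, Set.image_subset_iff, Set.preimage_eq_univ_iff,
    e.surjective.range_eq, Set.univ_subset_iff]

theorem isMinSpreading_preimage_finsetCongr (e : V' ≃ V) {S : Set V'} :
    IsMinSpreading (e.finsetCongr ⁻¹' T) S ↔ IsMinSpreading T (e '' S) := by
  simp_rw [IsMinSpreading, e.surjective.image_surjective.forall, isSpreading_preimage_finsetCongr,
    e.injective.injOn.image_ssubset_image_iff (Set.subset_univ _) (Set.subset_univ _)]

theorem IsSTS.exists_fin [Finite V] (hT : IsSTS T) :
    ∃ (m : ℕ) (T' : Set (Finset (Fin m))), IsSTS T' ∧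
      ∀ U : Finset V, IsMinSpreading T ↑U →
        ∃ U' : Finset (Fin m), IsMinSpreading T' ↑U' ∧ U'.card = U.card := by
  obtain ⟨m, ⟨e⟩⟩ := Finite.exists_equiv_fin V
  refine ⟨m, e.symm.finsetCongr ⁻¹' T, hT.preimage_finsetCongr e.symm, fun U hU ↦
    ⟨U.map e.toEmbedding, ?_, U.card_map _⟩⟩
  rw [isMinSpreading_preimage_finsetCongr, Finset.coe_map, ← Set.image_comp]
  simpa using hU

end Transport

/-- A Steiner quasigroup: an idempotent commutative operation with `x * (x * y) = y`. Steiner triple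
systems correspond to such operations, `μ x y` being the third point of the triple through `x ≠ y`.
-/
structure IsSteinerQuasigroup {V : Type*} (μ : V → V → V) : Prop where
  idem : ∀ x, μ x x = x
  comm : ∀ x y, μ x y = μ y x
  cancel_left : ∀ x y, μ x (μ x y) = y

/-- The triple system of a Steiner quasigroup. -/
def steinerTriples {V : Type*} [DecidableEq V] (μ : V → V → V) : Set (Finset V) :=
  {t | ∃ x y, x ≠ y ∧ t = {x, y, μ x y}}

namespace IsSteinerQuasigroup

variable {V : Type*} {μ : V → V → V} (h : IsSteinerQuasigroup μ)
include h

theorem apply_ne_left {x y : V} (hxy : x ≠ y) : μ x y ≠ x := fun e ↦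
  hxy <| by simpa [e, h.idem] using h.cancel_left x y

theorem apply_ne_right {x y : V} (hxy : x ≠ y) : μ x y ≠ y :=
  h.comm x y ▸ h.apply_ne_left hxy.symm

variable [DecidableEq V]

theorem eq_of_mem_steinerTriples {t : Finset V} (ht : t ∈ steinerTriples μ) {x y : V}
    (hx : x ∈ t) (hy : y ∈ t) (hxy : x ≠ y) : t = {x, y, μ x y} := by
  obtain ⟨a, b, -, rfl⟩ := ht
  have hab : μ a (μ a b) = b := h.cancel_left a b
  have hba : μ b (μ a b) = a := by rw [h.comm a, h.cancel_left]
  simp only [Finset.mem_insert, Finset.mem_singleton] at hx hy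
  rcases hx with rfl | rfl | rfl <;> rcases hy with rfl | rfl | rfl <;>
    grind [h.comm]

theorem isSTS_steinerTriples : IsSTS (steinerTriples μ) := by
  refine ⟨?_, fun x y hxy ↦ ⟨{x, y, μ x y}, ⟨⟨x, y, hxy, rfl⟩, by simp, by simp⟩, ?_⟩⟩
  · rintro _ ⟨x, y, hxy, rfl⟩
    exact Finset.card_eq_three.2
      ⟨x, y, μ x y, hxy, (h.apply_ne_left hxy).symm, (h.apply_ne_right hxy).symm, rfl⟩
  · rintro t ⟨ht, hx, hy⟩
    exact h.eq_of_mem_steinerTriples ht hx hy hxy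

theorem stsClosed_steinerTriples_iff {W : Set V} :
    StsClosed (steinerTriples μ) W ↔ ∀ x ∈ W, ∀ y ∈ W, μ x y ∈ W := by
  refine ⟨fun hW x hx y hy ↦ ?_, fun hW t ht x hxt y hyt hxy hx hy z hz ↦ ?_⟩
  · obtain rfl | hxy := eq_or_ne x y
    · rwa [h.idem]
    · exact hW {x, y, μ x y} ⟨x, y, hxy, rfl⟩ x (by simp) y (by simp) hxy hx hy _ (by simp)
  · rw [h.eq_of_mem_steinerTriples ht hxt hyt hxy, Finset.mem_insert, Finset.mem_insert,
      Finset.mem_singleton] at hz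
    rcases hz with rfl | rfl | rfl
    exacts [hx, hy, hW _ hx _ hy]

end IsSteinerQuasigroup

section Bose

variable (R : Type*) {V : Type*} [Ring R] [Invertible (2 : R)] [AddCommGroup V] [Module R V]
  [DecidableEq V]

/-- The quasigroup of the Bose construction on three copies of a module `V` in which `2` is
invertible. Its triples are the fibres `{(x, 0), (x, 1), (x, 2)}` and, for `x ≠ y`, the triples
`{(x, i), (y, i), (midpoint R x y, i + 1)}`. -/
def bose (v w : V × Fin 3) : V × Fin 3 :=
  if v.1 = w.1 then (v.1, -(v.2 + w.2))
  else if v.2 = w.2 then (midpoint R v.1 w.1, v.2 + 1)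
  else if w.2 = v.2 + 1 then (Equiv.pointReflection w.1 v.1, v.2)
  else (Equiv.pointReflection v.1 w.1, w.2)

theorem bose_same_fst (x : V) (i j : Fin 3) : bose R (x, i) (x, j) = (x, -(i + j)) := by
  simp [bose]

theorem bose_same_snd {x y : V} (hxy : x ≠ y) (i : Fin 3) :
    bose R (x, i) (y, i) = (midpoint R x y, i + 1) := by
  simp [bose, hxy]

theorem bose_snd_succ_right {x y : V} (hxy : x ≠ y) (i : Fin 3) :
    bose R (x, i) (y, i + 1) = (Equiv.pointReflection y x, i) := by
  simp [bose, hxy]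

theorem bose_snd_succ_left {x y : V} (hxy : x ≠ y) (i : Fin 3) :
    bose R (x, i + 1) (y, i) = (Equiv.pointReflection x y, i) := by
  have hi : i ≠ i + 1 + 1 := by decide +revert
  simp [bose, hxy, hi]

theorem isSteinerQuasigroup_bose : IsSteinerQuasigroup (bose R (V := V)) := by
  have neg_add_self : ∀ i : Fin 3, -(i + i) = i := by decide
  have trichotomy : ∀ i j : Fin 3, j = i ∨ j = i + 1 ∨ i = j + 1 := by decide
  refine ⟨fun ⟨x, i⟩ ↦ by rw [bose_same_fst, neg_add_self], ?_, ?_⟩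
  · rintro ⟨x, i⟩ ⟨y, j⟩
    obtain rfl | hxy := eq_or_ne x y
    · rw [bose_same_fst, bose_same_fst, add_comm]
    · obtain rfl | rfl | rfl := trichotomy i j
      · rw [bose_same_snd R hxy, bose_same_snd R hxy.symm, midpoint_comm]
      · rw [bose_snd_succ_right R hxy, bose_snd_succ_left R hxy.symm]
      · rw [bose_snd_succ_left R hxy, bose_snd_succ_right R hxy.symm]
  · rintro ⟨x, i⟩ ⟨y, j⟩
    obtain rfl | hxy := eq_or_ne x y
    · simp [bose_same_fst]
    · obtain rfl | rfl | rfl := trichotomy i j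
      · have hmid : x ≠ midpoint R x y := by simpa using hxy
        rw [bose_same_snd R hxy, bose_snd_succ_right R hmid, Equiv.pointReflection_midpoint_left]
      · have hrefl : x ≠ Equiv.pointReflection y x := fun h ↦
          hxy ((AffineEquiv.pointReflection_fixed_iff_of_module R).1 h.symm)
        rw [bose_snd_succ_right R hxy, bose_same_snd R hrefl, midpoint_pointReflection_right]
      · have hrefl : x ≠ Equiv.pointReflection x y := fun h ↦
          hxy ((Equiv.pointReflection x).injective (by simpa using h))
        rw [bose_snd_succ_left R hxy, bose_snd_succ_left R hrefl,
          Equiv.pointReflection_involutive]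

variable {R}

theorem stsClosed_bose_of_submodule (M : Submodule R V) :
    StsClosed (steinerTriples (bose R)) {v : V × Fin 3 | v.1 ∈ M} := by
  refine (isSteinerQuasigroup_bose R).stsClosed_steinerTriples_iff.2 fun v hv w hw ↦ ?_
  simp only [Set.mem_ofPred_eq] at hv hw ⊢
  unfold bose
  split_ifs <;>
    simp [midpoint_eq_smul_add, Equiv.pointReflection_apply, M.smul_mem, M.add_mem, M.sub_mem, hv,
      hw]

section Closed

variable {W : Set (V × Fin 3)} (hW : StsClosed (steinerTriples (bose R)) W)
include hW

theorem bose_mem_of_stsClosed {v w : V × Fin 3} (hv : v ∈ W) (hw : w ∈ W) : bose R v w ∈ W :=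
  (isSteinerQuasigroup_bose R).stsClosed_steinerTriples_iff.1 hW v hv w hw

theorem midpoint_mem_of_stsClosed {x y : V} {i : Fin 3} (hxy : x ≠ y) (hx : (x, i) ∈ W)
    (hy : (y, i) ∈ W) : (midpoint R x y, i + 1) ∈ W :=
  bose_same_snd R hxy i ▸ bose_mem_of_stsClosed hW hx hy

theorem pointReflection_mem_of_stsClosed {x y : V} {i : Fin 3} (hx : (x, i) ∈ W)
    (hy : (y, i + 1) ∈ W) : (Equiv.pointReflection y x, i) ∈ W := by
  obtain rfl | hxy := eq_or_ne x y
  · simpa using hx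
  · exact bose_snd_succ_right R hxy i ▸ bose_mem_of_stsClosed hW hx hy

theorem parallelogram_mem_of_stsClosed {x y z : V} {i : Fin 3} (hyz : y ≠ z) (hx : (x, i) ∈ W)
    (hy : (y, i) ∈ W) (hz : (z, i) ∈ W) : (y + z - x, i) ∈ W := by
  convert pointReflection_mem_of_stsClosed hW hx (midpoint_mem_of_stsClosed hW hyz hy hz) using 2
  rw [Equiv.pointReflection_apply, vsub_eq_sub, vadd_eq_add, sub_add_eq_add_sub,
    midpoint_add_self]

theorem fiber_mem_of_stsClosed {a b c : V} (hab : a ≠ b) (hac : a ≠ c) (hbc : b ≠ c)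
    (ha : (a, 0) ∈ W) (hb : (b, 0) ∈ W) (hc : (c, 0) ∈ W) (i : Fin 3) : (a, i) ∈ W := by
  have hmid : midpoint R (a + b - c) (a + c - b) = a := by
    rw [midpoint_eq_iff', Equiv.pointReflection_apply, vsub_eq_sub, vadd_eq_add]
    abel
  have hne : a + b - c ≠ a + c - b := by
    intro h
    rw [h, midpoint_self] at hmid
    have hcb : c = b := by simpa [add_sub_assoc, sub_eq_zero] using hmid
    exact hbc hcb.symm
  have ha1 : (a, 1) ∈ W := by
    simpa [hmid] using midpoint_mem_of_stsClosed hW hne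
      (parallelogram_mem_of_stsClosed hW hab hc ha hb)
      (parallelogram_mem_of_stsClosed hW hac hb ha hc)
  have ha2 : (a, 2) ∈ W :=
    bose_same_fst R a 0 1 ▸ bose_mem_of_stsClosed hW ha ha1
  fin_cases i
  exacts [ha, ha1, ha2]

section Coset

variable {a : V} (ha : ∀ i, (a, i) ∈ W)
include ha

theorem midpoint_mem_of_fiber_mem {x : V} {i : Fin 3} (hx : (x, i) ∈ W) :
    (midpoint R a x, i + 1) ∈ W := by
  obtain rfl | hax := eq_or_ne a x
  · simpa using ha (i + 1)
  · exact midpoint_mem_of_stsClosed hW hax (ha i) hx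

theorem add_sub_mem_of_fiber_mem {x y : V} {i : Fin 3} (hx : (a + x, i) ∈ W)
    (hy : (a + y, i) ∈ W) : (a + (x - y), i) ∈ W := by
  convert pointReflection_mem_of_stsClosed hW hy (midpoint_mem_of_fiber_mem hW ha hx) using 2
  rw [Equiv.pointReflection_apply, vsub_eq_sub, vadd_eq_add, sub_add_eq_add_sub,
    midpoint_add_self]
  abel

theorem succ_mem_of_fiber_mem {x : V} {i : Fin 3} (hx : (a + x, i) ∈ W) :
    (a + x, i + 1) ∈ W := by
  have hneg : (a + (0 - x), i) ∈ W := add_sub_mem_of_fiber_mem hW ha (by simpa using ha i) hx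
  convert midpoint_mem_of_fiber_mem hW ha (add_sub_mem_of_fiber_mem hW ha hx hneg) using 2
  rw [eq_comm, midpoint_eq_iff', Equiv.pointReflection_apply, vsub_eq_sub, vadd_eq_add]
  abel

theorem mem_iff_of_fiber_mem {x : V} (i : Fin 3) : (a + x, i) ∈ W ↔ (a + x, 0) ∈ W := by
  have hsucc {j : Fin 3} : (a + x, j) ∈ W → (a + x, j + 1) ∈ W := succ_mem_of_fiber_mem hW ha
  fin_cases i
  exacts [Iff.rfl, ⟨fun h ↦ hsucc (hsucc h), hsucc⟩, ⟨hsucc, fun h ↦ hsucc (hsucc h)⟩]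

theorem exists_addSubgroup_of_fiber_mem : ∃ H : AddSubgroup V, ∀ v, v ∈ W ↔ v.1 - a ∈ H := by
  refine ⟨.ofSub {x | (a + x, 0) ∈ W} ⟨0, by simpa using ha 0⟩ fun x hx y hy ↦ ?_, fun v ↦ ?_⟩
  · simpa [sub_eq_add_neg] using add_sub_mem_of_fiber_mem hW ha hx hy
  · change v ∈ W ↔ (a + (v.1 - a), 0) ∈ W
    rw [← mem_iff_of_fiber_mem hW ha v.2, add_sub_cancel]

end Coset

end Closed

end Bose

section Idempotents

theorem addSubgroup_eq_top_of_forall_sub_mem {R ι : Type*} [Ring R] [Fintype ι] [Nontrivial ι]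
    (hR : Function.Surjective (Int.cast : ℤ → R)) {e : ι → R}
    (he : CompleteOrthogonalIdempotents e) {H : AddSubgroup R} (hH : ∀ i j, e i - e j ∈ H) :
    H = ⊤ := by
  have hmul (r : R) {x : R} (hx : x ∈ H) : r * x ∈ H := by
    obtain ⟨k, rfl⟩ := hR r
    exact AddSubgroup.int_mul_mem k hx
  have hmem (i : ι) : e i ∈ H := by
    obtain ⟨j, hj⟩ := exists_ne i
    simpa [mul_sub, (he.idem i).eq, he.ortho hj.symm] using hmul (e i) (hH i j)
  have hone : 1 ∈ H := he.complete ▸ H.sum_mem fun i _ ↦ hmem i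
  exact (AddSubgroup.eq_top_iff' H).2 fun x ↦ by simpa using hmul x hone

theorem injective_of_orthogonalIdempotents {R ι : Type*} [Semiring R] {e : ι → R}
    (he : OrthogonalIdempotents e) (he0 : ∀ i, e i ≠ 0) : Function.Injective e := by
  intro i j hij
  by_contra hne
  exact he0 i <| by rw [← (he.idem i).eq, ← he.ortho hne, hij]

theorem isMinSpreading_bose_range {R ι : Type*} [CommRing R] [Invertible (2 : R)] [DecidableEq R]
    [Fintype ι] (hR : Function.Surjective (Int.cast : ℤ → R)) {e : ι → R}
    (he : CompleteOrthogonalIdempotents e) (he0 : ∀ i, e i ≠ 0) (hι : 2 < Fintype.card ι) :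
    IsMinSpreading (steinerTriples (bose R)) (Set.range fun i ↦ (e i, (0 : Fin 3))) := by
  refine IsSpreading.isMinSpreading (isSpreading_iff.2 fun W heW hW ↦ ?_) ?_
  · obtain ⟨i, j, k, hij, hik, hjk⟩ := Fintype.two_lt_card_iff.1 hι
    have hmem (l : ι) : (e l, 0) ∈ W := heW ⟨l, rfl⟩
    have hinj := injective_of_orthogonalIdempotents he.toOrthogonalIdempotents he0
    have hfiber := fiber_mem_of_stsClosed hW (hinj.ne hij) (hinj.ne hik) (hinj.ne hjk)
      (hmem i) (hmem j) (hmem k)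
    obtain ⟨H, hH⟩ := exists_addSubgroup_of_fiber_mem hW hfiber
    have hsub (l : ι) : e l - e i ∈ H := (hH _).1 (hmem l)
    have : Nontrivial ι := ⟨i, j, hij⟩
    have htop : H = ⊤ := addSubgroup_eq_top_of_forall_sub_mem hR he fun l m ↦ by
      simpa using H.sub_mem (hsub l) (hsub m)
    exact Set.eq_univ_of_forall fun v ↦ (hH v).2 (htop ▸ AddSubgroup.mem_top _)
  · rintro _ ⟨i, rfl⟩
    refine ⟨_, stsClosed_bose_of_submodule (LinearMap.ker (LinearMap.mulLeft R (e i))), ?_, ?_⟩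
    · rintro _ ⟨⟨j, rfl⟩, hji⟩
      have hij : i ≠ j := fun h ↦ hji (by simp [h])
      simpa using he.ortho hij
    · simpa [(he.idem i).eq] using he0 i

theorem completeOrthogonalIdempotents_fiberwise {ι κ : Type*} [Fintype κ] [DecidableEq κ]
    (R : ι → Type*) [∀ i, Semiring (R i)] (f : ι → κ) :
    CompleteOrthogonalIdempotents fun (j : κ) (i : ι) ↦ if f i = j then (1 : R i) else 0 := by
  refine ⟨⟨fun j ↦ funext fun i ↦ ?_, fun j k hjk ↦ funext fun i ↦ ?_⟩, funext fun i ↦ ?_⟩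
  · by_cases hj : f i = j <;> simp [hj]
  · by_cases hj : f i = j
    · simp [hj, hjk]
    · simp [hj]
  · simp

theorem exists_completeOrthogonalIdempotents_pi {ι κ : Type*} [Fintype ι] [Fintype κ] [Nonempty κ]
    (hκι : Fintype.card κ ≤ Fintype.card ι) (R : ι → Type*) [∀ i, Semiring (R i)]
    [∀ i, Nontrivial (R i)] :
    ∃ e : κ → Π i, R i, CompleteOrthogonalIdempotents e ∧ ∀ j, e j ≠ 0 := by
  classical
  obtain ⟨g⟩ := Function.Embedding.nonempty_of_card_le hκι
  refine ⟨_, completeOrthogonalIdempotents_fiberwise R (Function.invFun g), fun j hj ↦ ?_⟩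
  obtain ⟨i, hi⟩ := Function.invFun_surjective g.injective j
  simpa [hi] using congrFun hj i

theorem intCast_surjective_pi_zmod {ι : Type*} [Finite ι] {p : ι → ℕ}
    (hp : Pairwise (Function.onFun Nat.Coprime p)) :
    Function.Surjective (Int.cast : ℤ → Π i, ZMod (p i)) := by
  have := Fintype.ofFinite ι
  have h := (ZMod.prodEquivPi p hp).surjective.comp ZMod.intCast_surjective
  simpa [Function.comp_def] using h

end Idempotents

theorem exists_isMinSpreading_bose_pi_zmod {ι : Type*} [Fintype ι] {p : ι → ℕ}
    [∀ i, Nontrivial (ZMod (p i))] [Invertible (2 : Π i, ZMod (p i))]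
    (hp : Pairwise (Function.onFun Nat.Coprime p)) {k : ℕ} (hk : 3 ≤ k) (hkι : k ≤ Fintype.card ι) :
    ∃ U : Finset ((Π i, ZMod (p i)) × Fin 3),
      IsMinSpreading (steinerTriples (bose (Π i, ZMod (p i)) (V := Π i, ZMod (p i)))) ↑U ∧
        U.card = k := by
  have : Nonempty (Fin k) := ⟨⟨0, by lia⟩⟩
  obtain ⟨e, he, he0⟩ := exists_completeOrthogonalIdempotents_pi (κ := Fin k) (by simpa)
    (fun i ↦ ZMod (p i))
  have hinj : Function.Injective fun j ↦ (e j, (0 : Fin 3)) := fun i j hij ↦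
    injective_of_orthogonalIdempotents he.toOrthogonalIdempotents he0 (congrArg Prod.fst hij)
  refine ⟨Finset.univ.map ⟨_, hinj⟩, ?_, by simp⟩
  simpa using isMinSpreading_bose_range (intCast_surjective_pi_zmod hp) he he0 (by simpa)

theorem exists_sts_minSpreading_three_and_n_general (n : ℕ) :
    ∃ (m : ℕ) (T : Set (Finset (Fin m))), IsSTS T ∧
      ∀ k, 3 ≤ k → k ≤ n → ∃ U : Finset (Fin m), IsMinSpreading T ↑U ∧ U.card = k := by
  let p (i : Fin n) : ℕ := i.1.fermatNumber
  have hp : Pairwise (Function.onFun Nat.Coprime p) := fun i j hij ↦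
    Nat.coprime_fermatNumber_fermatNumber (Fin.val_injective.ne hij)
  have (i : Fin n) : Fact (1 < p i) := ⟨by linarith [Nat.three_le_fermatNumber i]⟩
  have (i : Fin n) : NeZero (p i) := ⟨by linarith [Nat.three_le_fermatNumber i]⟩
  have h2 : IsUnit (2 : Π i, ZMod (p i)) := Pi.isUnit_iff.2 fun i ↦
    (ZMod.isUnit_iff_coprime 2 (p i)).2 (Nat.odd_fermatNumber i).coprime_two_left
  let : Invertible (2 : Π i, ZMod (p i)) := h2.invertible
  have hbose := isSteinerQuasigroup_bose (Π i, ZMod (p i)) (V := Π i, ZMod (p i))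
  obtain ⟨m, T, hT, htransport⟩ := hbose.isSTS_steinerTriples.exists_fin
  refine ⟨m, T, hT, fun k hk hkn ↦ ?_⟩
  obtain ⟨U, hU, rfl⟩ := exists_isMinSpreading_bose_pi_zmod hp hk (by simpa)
  exact htransport U hU

/-- For every integer `n > 3` there exists a Steiner triple system having both a
minimal spreading set of size `3` and a minimal spreading set of size `n`. -/
theorem exists_sts_minSpreading_three_and_n (n : ℕ) (hn : 3 < n) :
    ∃ (m : ℕ) (T : Set (Finset (Fin m))),
      IsSTS T ∧
      (∃ U : Finset (Fin m), IsMinSpreading T ↑U ∧ U.card = 3) ∧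
      (∃ U : Finset (Fin m), IsMinSpreading T ↑U ∧ U.card = n) := by
  obtain ⟨m, T, hT, hU⟩ := exists_sts_minSpreading_three_and_n_general n
  exact ⟨m, T, hT, hU 3 le_rfl hn.le, hU n hn.le le_rfl⟩
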